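/- For 0 < λ < 1 let φ_λ = B ( W^{1/2}/(W+λ) · ω′ ) ∈ L²(I), where ω′(x) = (1/2) cos(x/2) for x ∈ (0,2π) and ω′(0) = 0, and W^{1/2}/(W+λ) acts by multiplication. Then for every 0 < ε < 3/10 there is a constant c_ε > 0 such that for all x ∈ I and all 0 < λ < 1, |φ_λ(x)| ≤ c_ε λ^{−1/10 − ε} (V(x) sin(x/2))^{−1/2}. -/

import Mathlib

open MeasureTheory Real Set Filter
open scoped Topology ENNReal ComplexConjugate

noncomputable section

/-- The fundamental periodic cell `I = [0, 2π)`. -/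
def II : Set ℝ := Set.Ico 0 (2 * π)

/-- Lebesgue measure restricted to `I`. -/
def muI : Measure ℝ := volume.restrict II

/-- The dispersion relation `ω(x) = |sin(x/2)|`. -/
def omg (x : ℝ) : ℝ := |Real.sin (x / 2)|

/-- `Ω(x,y,z) = ω(x) + ω(y) − ω(z) − ω(x+y−z)`. -/
def Omg (x y z : ℝ) : ℝ := omg x + omg y - omg z - omg (x + y - z)

/-- The representative of `x` modulo `2π` lying in `[0, 2π)`. -/
def mod2pi (x : ℝ) : ℝ := x - 2 * π * (⌊x / (2 * π)⌋ : ℝ)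

/-- `h` on the fundamental cell: `h(x,z) = (z−x)/2 + 2 arcsin( tan(|z−x|/4) cos((x+z)/4) )`. -/
def h0 (x z : ℝ) : ℝ :=
  (z - x) / 2 + 2 * Real.arcsin (Real.tan (|z - x| / 4) * Real.cos ((x + z) / 4))

/-- The extension of `h` to all of `ℝ²`: `h(x,z) = h(x mod 2π, z mod 2π) − (x − (x mod 2π))`. -/
def hFPU (x z : ℝ) : ℝ := h0 (mod2pi x) (mod2pi z) - (x - mod2pi x)

/-- `F₊(x,y) = (cos(x/2)+cos(y/2))² + 4 sin(x/2) sin(y/2)`. -/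
def Fp (x y : ℝ) : ℝ :=
  (Real.cos (x / 2) + Real.cos (y / 2)) ^ 2 + 4 * Real.sin (x / 2) * Real.sin (y / 2)

/-- `F₋(x,y) = (cos(x/2)+cos(y/2))² − 4 sin(x/2) sin(y/2)`. -/
def Fm (x y : ℝ) : ℝ :=
  (Real.cos (x / 2) + Real.cos (y / 2)) ^ 2 - 4 * Real.sin (x / 2) * Real.sin (y / 2)

/-- The kernel `K₁(x,y) = 4·𝟙(F₋(x,y) > 0)/√(F₋(x,y))`. -/
def K1 (x y : ℝ) : ℝ := if 0 < Fm x y then 4 / Real.sqrt (Fm x y) else 0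

/-- The kernel `K₂(x,y) = 2/√(F₊(x,y))`. -/
def K2 (x y : ℝ) : ℝ := 2 / Real.sqrt (Fp x y)

/-- `V(x) = ∫_I K₂(x,y) dy`. -/
def VV (x : ℝ) : ℝ := ∫ y in II, K2 x y

/-- `W(x) = sin²(x/2)·V(x)`. -/
def WW (x : ℝ) : ℝ := Real.sin (x / 2) ^ 2 * VV x

/-- `ω′(x) = (1/2)cos(x/2)` on `(0,2π)`, `ω′(0) = 0`. -/
def omg' (x : ℝ) : ℝ := if x = 0 then 0 else Real.cos (x / 2) / 2

/-- The kernel of `B`: `B(x,y) = V(x)^{−1/2}(2K₂(x,y)−K₁(x,y))V(y)^{−1/2}`. -/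
def Bker (x y : ℝ) : ℝ :=
  VV x ^ (-(1 : ℝ) / 2) * (2 * K2 x y - K1 x y) * VV y ^ (-(1 : ℝ) / 2)

/-- `φ_λ = B (W^{1/2}/(W+λ) ω′)`, computed via the kernel of `B`. -/
def phiLam (lam x : ℝ) : ℝ :=
  ∫ y in II, Bker x y * (Real.sqrt (WW y) / (WW y + lam) * omg' y)

lemma alg_deriv (sa ca sb cb : ℝ) (hsa : 0 < sa) (hsb : 0 < sb) (ha : sa ^ 2 + ca ^ 2 = 1)
    (hb : sb ^ 2 + cb ^ 2 = 1) (hC : 0 < ca + cb) (hF : 0 < (ca + cb) ^ 2 - 4 * sa * sb) :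
    2 * sa ≤ (ca + cb) * sb + 2 * sa * cb := by
  have hsa1 : sa ≤ 1 := by nlinarith [sq_nonneg ca]
  have hsb1 : sb ≤ 1 := by nlinarith [sq_nonneg cb]
  have hca1 : ca ≤ 1 := by nlinarith [sq_nonneg sa]
  have hcb1 : cb ≤ 1 := by nlinarith [sq_nonneg sb]
  have hcb2 : -1 ≤ cb := by nlinarith [sq_nonneg sb]
  have key : (ca + cb) ^ 2 * sb ^ 2 ≥ 4 * sa * sb ^ 3 := by
    have : 0 < sb ^ 2 := by positivity
    nlinarith
  suffices h : 2 * sa * (1 - cb) ≤ (ca + cb) * sb by linarith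
  have hp : 0 ≤ (ca + cb) * sb := by positivity
  refine abs_le_of_sq_le_sq' (a := 2 * sa * (1 - cb)) ?_ hp |>.2
  rw [mul_pow, mul_pow (ca + cb)]
  refine le_trans ?_ key
  rcases le_total cb 0 with h | h
  · have h1 : 1 + cb ≤ sb ^ 2 := by nlinarith
    have h2 : (ca + cb) ^ 2 ≤ sb ^ 4 := by
      have : ca + cb ≤ sb ^ 2 := by linarith
      calc (ca + cb) ^ 2 ≤ (sb ^ 2) ^ 2 := by gcongr
        _ = sb ^ 4 := by ring
    have h3 : 4 * sa < sb ^ 3 := by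
      by_contra hc
      have : sb ^ 4 ≤ 4 * sa * sb := by nlinarith
      linarith
    have h4 : (1 - cb) ^ 2 ≤ 4 := by nlinarith
    calc (2 * sa) ^ 2 * (1 - cb) ^ 2 ≤ (2 * sa) ^ 2 * 4 := by gcongr
      _ = 4 * sa * (4 * sa) := by ring
      _ ≤ 4 * sa * sb ^ 3 := by gcongr
  · have h1 : 1 - cb ≤ sb ^ 2 := by nlinarith
    have h2 : (1 - cb) ^ 2 ≤ sb ^ 4 := by
      calc (1 - cb) ^ 2 ≤ (sb ^ 2) ^ 2 := by
            have : 0 ≤ 1 - cb := by linarith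
            gcongr
        _ = sb ^ 4 := by ring
    have h3 : sb ^ 4 ≤ sb ^ 3 := pow_le_pow_of_le_one hsb.le hsb1 (by norm_num)
    calc (2 * sa) ^ 2 * (1 - cb) ^ 2 ≤ (2 * sa) ^ 2 * sb ^ 3 := by gcongr; linarith
      _ = 4 * sa * sb ^ 3 * sa := by ring
      _ ≤ 4 * sa * sb ^ 3 * 1 := by gcongr
      _ = _ := by ring

lemma L_mono (a b b' : ℝ) (ha : 0 < a) (hb : 0 < b) (hbb : b ≤ b') (hab : a + b' < π) :
    2 * cos ((a + b') / 2) - sin a - sin b' ≤ 2 * cos ((a + b) / 2) - sin a - sin b := by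
  obtain ⟨d, rfl⟩ : ∃ d, b' = b + 2 * d := ⟨(b' - b) / 2, by ring⟩
  obtain ⟨m, rfl⟩ : ∃ m, b = m - d := ⟨b + d, by ring⟩
  have hd : 0 ≤ d := by linarith
  have h1 : cos ((a + (m - d)) / 2) - cos ((a + (m - d + 2 * d)) / 2)
      = 2 * sin ((a + m) / 2) * sin (d / 2) := by
    rw [show (a + (m - d)) / 2 = (a + m) / 2 - d / 2 by ring,
      show (a + (m - d + 2 * d)) / 2 = (a + m) / 2 + d / 2 by ring, cos_sub, cos_add]; ring
  have h2 : sin (m - d + 2 * d) - sin (m - d) = 4 * (cos m * sin (d / 2) * cos (d / 2)) := by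
    rw [show m - d + 2 * d = m + d by ring, sin_sub, sin_add]
    have : sin d = 2 * sin (d / 2) * cos (d / 2) := by rw [← sin_two_mul]; ring_nf
    rw [this]; ring
  have h3 : 0 ≤ sin (d / 2) := sin_nonneg_of_nonneg_of_le_pi (by linarith) (by linarith)
  have h4 : cos (π - m) ≤ cos (π / 2 - (a + m) / 2) :=
    cos_le_cos_of_nonneg_of_le_pi (by linarith) (by linarith) (by linarith)
  rw [cos_pi_sub, cos_pi_div_two_sub] at h4
  have h5 : 0 ≤ sin ((a + m) / 2) :=
    sin_nonneg_of_nonneg_of_le_pi (by linarith) (by linarith)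
  have h6 : 0 ≤ cos (d / 2) := cos_nonneg_of_neg_pi_div_two_le_of_le (by linarith) (by linarith)
  have h7 : cos (d / 2) ≤ 1 := cos_le_one _
  have h8 : 0 ≤ sin ((a + m) / 2) + cos m * cos (d / 2) := by
    rcases le_total 0 (cos m) with h | h <;> nlinarith
  nlinarith [mul_nonneg h3 h8]

/-- the region `S`. -/
def SS (x : ℝ) : Set ℝ := {y | y ∈ Ioo 0 (2 * π) ∧ 0 < cos (x / 2) + cos (y / 2) ∧ 0 < Fm x y}

lemma SS_lower (x y y' : ℝ) (hx : x ∈ Ioo 0 (2 * π)) (hy : 0 < y) (hyy : y ≤ y')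
    (h : y' ∈ SS x) : y ∈ SS x := by
  obtain ⟨⟨h1, h2⟩, h3, h4⟩ := h
  obtain ⟨hx1, hx2⟩ := hx
  have hab : x / 2 + y' / 2 < π := by
    by_contra hcon
    have : cos (y' / 2) ≤ cos (π - x / 2) :=
      cos_le_cos_of_nonneg_of_le_pi (by linarith) (by linarith) (by linarith)
    rw [cos_pi_sub] at this
    linarith
  have h5 : cos (y' / 2) ≤ cos (y / 2) :=
    cos_le_cos_of_nonneg_of_le_pi (by linarith) (by linarith) (by linarith)
  have hF : ∀ z, Fm x z = (2 * cos ((x / 2 + z / 2) / 2)) ^ 2 - (sin (x / 2) + sin (z / 2)) ^ 2 := by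
    intro z
    have e : (2 * cos ((x / 2 + z / 2) / 2)) ^ 2 = 2 + 2 * cos (x / 2 + z / 2) := by
      rw [mul_pow, cos_sq, show 2 * ((x / 2 + z / 2) / 2) = x / 2 + z / 2 by ring]; ring
    rw [e, cos_add, Fm]
    nlinarith [sin_sq_add_cos_sq (x / 2), sin_sq_add_cos_sq (z / 2)]
  have hL := L_mono (x / 2) (y / 2) (y' / 2) (by linarith) (by linarith) (by linarith) hab
  have hs : 0 < sin (x / 2) := sin_pos_of_pos_of_lt_pi (by linarith) (by linarith)
  have hs1 : 0 < sin (y / 2) := sin_pos_of_pos_of_lt_pi (by linarith) (by linarith)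
  have hs2 : 0 < sin (y' / 2) := sin_pos_of_pos_of_lt_pi (by linarith) (by linarith)
  have hp : 0 < cos ((x / 2 + y' / 2) / 2) := cos_pos_of_mem_Ioo ⟨by linarith, by linarith⟩
  refine ⟨⟨hy, by linarith⟩, by linarith, ?_⟩
  rw [hF] at h4 ⊢
  have h9 : sin (x / 2) + sin (y' / 2) < 2 * cos ((x / 2 + y' / 2) / 2) := by nlinarith
  nlinarith

lemma Fm_deriv (x y : ℝ) : HasDerivAt (fun y => Fm x y)
    (-((cos (x / 2) + cos (y / 2)) * sin (y / 2) + 2 * sin (x / 2) * cos (y / 2))) y := by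
  have h0 : HasDerivAt (fun y : ℝ => y / 2) (1 / 2) y := (hasDerivAt_id y).div_const 2
  have h1 := h0.cos
  have h2 := h0.sin
  have := ((h1.const_add (cos (x / 2))).pow 2).sub (h2.const_mul (4 * sin (x / 2)))
  refine HasDerivAt.congr_deriv this ?_
  simp; ring

lemma Fm_diff (x y y' : ℝ) (hx : x ∈ Ioo 0 (2 * π)) (hy : y ∈ SS x) (hy' : y' ∈ SS x) :
    2 * sin (x / 2) * (y' - y) ≤ Fm x y := by
  have hs : 0 < sin (x / 2) := sin_pos_of_pos_of_lt_pi (by linarith [hx.1]) (by linarith [hx.2])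
  rcases le_total y' y with h | h
  · nlinarith [hy.2.2]
  have hsub : ∀ z ∈ Icc y y', z ∈ SS x := fun z hz =>
    SS_lower x z y' hx (hy.1.1.trans_le hz.1) hz.2 hy'
  have := (convex_Icc y y').image_sub_le_mul_sub_of_deriv_le (f := fun y => Fm x y)
    (C := -(2 * sin (x / 2)))
    (fun z _ => (Fm_deriv x z).continuousAt.continuousWithinAt)
    (fun z _ => (Fm_deriv x z).differentiableAt.differentiableWithinAt)
    (fun z hz => by
      obtain ⟨⟨h1, h2⟩, h3, h4⟩ := hsub z (interior_subset hz)
      rw [(Fm_deriv x z).deriv]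
      have := alg_deriv (sin (x / 2)) (cos (x / 2)) (sin (z / 2)) (cos (z / 2)) hs
        (sin_pos_of_pos_of_lt_pi (by linarith) (by linarith)) (sin_sq_add_cos_sq _)
        (sin_sq_add_cos_sq _) h3 h4
      linarith)
    y (left_mem_Icc.2 h) y' (right_mem_Icc.2 h) h
  have h2 := hy'.2.2
  linarith

lemma exists_y0 (x : ℝ) (hx : x ∈ Ioo 0 (2 * π)) : ∃ y0 ∈ Icc 0 (2 * π), ∀ y ∈ SS x,
    2 * sin (x / 2) * |y - y0| ≤ Fm x y := by
  rcases (SS x).eq_empty_or_nonempty with h | h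
  · exact ⟨0, ⟨le_rfl, by positivity⟩, by simp [h]⟩
  have hs : 0 < sin (x / 2) := sin_pos_of_pos_of_lt_pi (by linarith [hx.1]) (by linarith [hx.2])
  have hbdd : BddAbove (SS x) := ⟨2 * π, fun y hy => hy.1.2.le⟩
  obtain ⟨z, hz⟩ := h
  refine ⟨sSup (SS x), ⟨hz.1.1.le.trans (le_csSup hbdd hz), csSup_le ⟨z, hz⟩ fun y hy => hy.1.2.le⟩, ?_⟩
  intro y hy
  have h1 : sSup (SS x) ≤ y + Fm x y / (2 * sin (x / 2)) := by
    refine csSup_le ⟨z, hz⟩ fun y' hy' => ?_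
    have := Fm_diff x y y' hx hy hy'
    have : y' - y ≤ Fm x y / (2 * sin (x / 2)) := by
      rw [le_div_iff₀ (by positivity)]; linarith
    linarith
  have h2 := le_csSup hbdd hy
  rw [abs_of_nonpos (by linarith)]
  have h3 : -(y - sSup (SS x)) ≤ Fm x y / (2 * sin (x / 2)) := by linarith
  rw [le_div_iff₀ (by positivity)] at h3
  linarith

lemma exists_y1 (x : ℝ) (hx : x ∈ Ioo 0 (2 * π)) : ∃ y1 ∈ Icc 0 (2 * π), ∀ y ∈ Ioo 0 (2 * π),
    cos (x / 2) + cos (y / 2) < 0 → 0 < Fm x y → 2 * sin (x / 2) * |y - y1| ≤ Fm x y := by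
  obtain ⟨y0, hy0, h⟩ := exists_y0 (2 * π - x) ⟨by linarith [hx.2], by linarith [hx.1]⟩
  refine ⟨2 * π - y0, ⟨by linarith [hy0.2], by linarith [hy0.1]⟩, fun y hy hc hF => ?_⟩
  have e : ∀ z : ℝ, (2 * π - z) / 2 = π - z / 2 := fun z => by ring
  have hFe : Fm (2 * π - x) (2 * π - y) = Fm x y := by
    simp only [Fm, e, cos_pi_sub, sin_pi_sub]; ring
  have := h (2 * π - y) ⟨⟨by linarith [hy.2], by linarith [hy.1]⟩, by
    simp only [e, cos_pi_sub]; linarith, by rwa [hFe]⟩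
  rw [hFe, e, sin_pi_sub, show 2 * π - y - y0 = -(y - (2 * π - y0)) by ring, abs_neg] at this
  exact this

lemma abs_rpow_bound (r : ℝ) (hr : -1 < r) : ∃ M : ℝ, ∀ z ∈ Icc 0 (2 * π),
    IntegrableOn (fun y => |y - z| ^ r) II ∧ ∫ y in II, |y - z| ^ r ≤ M := by
  have hpi := pi_pos
  have h1 : IntegrableOn (fun u : ℝ => |u| ^ r) (Ioc 0 (2 * π)) := by
    have := (intervalIntegral.intervalIntegrable_rpow' hr (a := 0) (b := 2 * π))
    rw [intervalIntegrable_iff_integrableOn_Ioc_of_le (by positivity)] at this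
    refine this.congr_fun (fun u hu => ?_) measurableSet_Ioc
    simp only [abs_of_pos hu.1]
  have h2 : IntegrableOn (fun u : ℝ => |u| ^ r) (Ico (-(2 * π)) 0) := by
    have := h1.comp_neg
    simpa using this
  have h3 : IntegrableOn (fun u : ℝ => |u| ^ r) (Icc (-(2 * π)) (2 * π)) := by
    have h4 : IntegrableOn (fun u : ℝ => |u| ^ r) {(0 : ℝ)} := by simp
    refine ((h1.union h2).union h4).mono_set fun u hu => ?_
    rcases lt_trichotomy u 0 with h | h | h
    · exact Or.inl (Or.inr ⟨hu.1, h⟩)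
    · exact Or.inr h
    · exact Or.inl (Or.inl ⟨h, hu.2⟩)
  have h5 := (integrable_indicator_iff measurableSet_Icc).2 h3
  refine ⟨∫ u, (Icc (-(2 * π)) (2 * π)).indicator (fun u : ℝ => |u| ^ r) u, fun z hz => ?_⟩
  have h6 := h5.comp_sub_right z
  have heq : ∀ y ∈ II, (Icc (-(2 * π)) (2 * π)).indicator (fun u : ℝ => |u| ^ r) (y - z)
      = |y - z| ^ r := by
    intro y hy
    rw [indicator_of_mem]
    exact ⟨by linarith [hy.1, hz.2], by linarith [hy.2, hz.1]⟩
  have hm : MeasurableSet II := measurableSet_Ico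
  refine ⟨h6.integrableOn.congr_fun heq hm, ?_⟩
  rw [← setIntegral_congr_fun hm heq]
  refine (setIntegral_le_integral h6 (Eventually.of_forall fun y => ?_)).trans_eq ?_
  · exact indicator_nonneg (fun u _ => by positivity) _
  · exact integral_sub_right_eq_self (fun u => (Icc (-(2 * π)) (2 * π)).indicator (fun u : ℝ => |u| ^ r) u) z

lemma ae_Ioo : ∀ᵐ y ∂(volume.restrict II), y ∈ Ioo 0 (2 * π) := by
  have h : volume.restrict II = volume.restrict (Ioo 0 (2 * π)) :=
    (Measure.restrict_congr_set Ioo_ae_eq_Ico).symm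
  rw [h]
  exact ae_restrict_mem measurableSet_Ioo

lemma sin_half_pos {y : ℝ} (hy : y ∈ Ioo 0 (2 * π)) : 0 < sin (y / 2) :=
  sin_pos_of_pos_of_lt_pi (by linarith [hy.1]) (by linarith [hy.2])

lemma sin_rpow_int (r : ℝ) (hr : -1 < r) (hr0 : r ≤ 0) :
    IntegrableOn (fun y => sin (y / 2) ^ r) II := by
  have hpi := pi_pos
  obtain ⟨M, hM⟩ := abs_rpow_bound r hr
  have h1 := (hM 0 ⟨le_rfl, by positivity⟩).1
  have h2 := (hM (2 * π) ⟨by positivity, le_rfl⟩).1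
  have hg : IntegrableOn (fun y => (1 / π) ^ r * (|y - 0| ^ r + |y - 2 * π| ^ r)) II :=
    (h1.add h2).const_mul ((1 / π) ^ r)
  refine Integrable.mono' hg ?_ ?_
  · have : Measurable (fun y : ℝ => sin (y / 2) ^ r) := by fun_prop
    exact this.aestronglyMeasurable
  · filter_upwards [ae_Ioo] with y hy
    have hs := sin_half_pos hy
    rw [Real.norm_of_nonneg (by positivity)]
    rcases le_total y π with h | h
    · have h3 : 1 / π * |y - 0| ≤ sin (y / 2) := by
        have := mul_le_sin (x := y / 2) (by linarith [hy.1]) (by linarith)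
        rw [sub_zero, abs_of_pos hy.1]
        calc 1 / π * y = 2 / π * (y / 2) := by ring
          _ ≤ _ := this
      have hp : 0 < |y - 0| := by rw [sub_zero]; exact abs_pos.2 hy.1.ne'
      calc sin (y / 2) ^ r ≤ (1 / π * |y - 0|) ^ r :=
            rpow_le_rpow_of_nonpos (by positivity) h3 hr0
        _ = (1 / π) ^ r * |y - 0| ^ r := mul_rpow (by positivity) (by positivity)
        _ ≤ _ := by
          gcongr
          have : 0 ≤ |y - 2 * π| ^ r := by positivity
          linarith
    · have h3 : 1 / π * |y - 2 * π| ≤ sin (y / 2) := by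
        have := mul_le_sin (x := π - y / 2) (by linarith [hy.2]) (by linarith)
        rw [sin_pi_sub] at this
        rw [abs_of_neg (by linarith [hy.2])]
        calc 1 / π * -(y - 2 * π) = 2 / π * (π - y / 2) := by ring
          _ ≤ _ := this
      have hp : 0 < |y - 2 * π| := abs_pos.2 (by linarith [hy.2])
      calc sin (y / 2) ^ r ≤ (1 / π * |y - 2 * π|) ^ r :=
            rpow_le_rpow_of_nonpos (by positivity) h3 hr0
        _ = (1 / π) ^ r * |y - 2 * π| ^ r := mul_rpow (by positivity) (by positivity)
        _ ≤ _ := by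
          gcongr
          have : 0 ≤ |y - 0| ^ r := by positivity
          linarith

lemma two_div_sqrt_le (c F t : ℝ) (hc : 0 ≤ c) (ht : 0 < t) (hF : t ≤ F) :
    c / √F ≤ c * t ^ (-(1 : ℝ) / 2) := by
  have : t ^ (-(1 : ℝ) / 2) = 1 / √t := by
    rw [neg_div, rpow_neg ht.le, ← sqrt_eq_rpow]; simp
  rw [this, mul_one_div]
  have := Real.sqrt_pos.2 ht
  gcongr

lemma K2_nonneg (x y : ℝ) : 0 ≤ K2 x y := by unfold K2; positivity
lemma K1_nonneg (x y : ℝ) : 0 ≤ K1 x y := by unfold K1; split_ifs <;> positivity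

lemma K2_le (x y : ℝ) (hx : x ∈ Ioo 0 (2 * π)) (hy : y ∈ Ioo 0 (2 * π)) :
    K2 x y ≤ 2 * (sin (x / 2) ^ (-(1 : ℝ) / 2) * sin (y / 2) ^ (-(1 : ℝ) / 2)) := by
  have h1 := sin_half_pos hx
  have h2 := sin_half_pos hy
  rw [← mul_rpow h1.le h2.le]
  refine two_div_sqrt_le _ _ _ (by norm_num) (by positivity) ?_
  unfold Fp
  nlinarith [sq_nonneg (cos (x / 2) + cos (y / 2)), mul_pos h1 h2]

lemma K2_int (x : ℝ) (hx : x ∈ Ioo 0 (2 * π)) : IntegrableOn (K2 x) II := by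
  have hg := ((sin_rpow_int (-(1 : ℝ) / 2) (by norm_num) (by norm_num)).const_mul
    (sin (x / 2) ^ (-(1 : ℝ) / 2))).const_mul 2
  refine Integrable.mono' hg ?_ ?_
  · have : Measurable (K2 x) := by unfold K2 Fp; fun_prop
    exact this.aestronglyMeasurable
  · filter_upwards [ae_Ioo] with y hy
    rw [Real.norm_of_nonneg (K2_nonneg _ _)]
    exact K2_le x y hx hy

lemma Fp_le_aux (u v r : ℝ) (hu : 0 ≤ u) (hu2 : u ≤ π / 2) (hr : 0 ≤ r) (hr1 : r ≤ 1)
    (hru : sin u = r ^ 3) (hv : 0 ≤ v) (hvr : v ≤ r) :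
    (cos u - cos v) ^ 2 + 4 * sin u * sin v ≤ 5 * r ^ 4 := by
  have hpi := pi_gt_three
  have hcu : 0 ≤ cos u := cos_nonneg_of_neg_pi_div_two_le_of_le (by linarith) hu2
  have hcv : 0 ≤ cos v := cos_nonneg_of_neg_pi_div_two_le_of_le (by linarith) (by linarith)
  have hsv : sin v ≤ v := sin_le hv
  have hsv0 : 0 ≤ sin v := sin_nonneg_of_nonneg_of_le_pi hv (by linarith)
  have h1 : 1 - cos u ≤ r ^ 2 := by
    have h := sin_sq_add_cos_sq u
    have : 1 - cos u ≤ sin u ^ 2 := by nlinarith [cos_le_one u]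
    have h3 : r ^ 6 ≤ r ^ 2 := pow_le_pow_of_le_one hr hr1 (by norm_num)
    rw [hru] at this
    nlinarith
  have h2 : 1 - cos v ≤ r ^ 2 := by
    have h := sin_sq_add_cos_sq v
    have : 1 - cos v ≤ sin v ^ 2 := by nlinarith [cos_le_one v]
    nlinarith
  have h3 : (cos u - cos v) ^ 2 ≤ (r ^ 2) ^ 2 :=
    sq_le_sq' (by linarith [cos_le_one v]) (by linarith [cos_le_one u])
  have h4 : 4 * sin u * sin v ≤ 4 * r ^ 3 * r := by
    rw [hru]; gcongr; linarith
  nlinarith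

lemma VV_lower (x : ℝ) (hx : x ∈ Ioo 0 (2 * π)) : sin (x / 2) ^ (-(1 : ℝ) / 3) ≤ VV x := by
  have hs := sin_half_pos hx
  have hpi := pi_gt_three
  obtain ⟨r, hrdef⟩ : ∃ r, r = sin (x / 2) ^ ((1 : ℝ) / 3) := ⟨_, rfl⟩
  have hr : 0 < r := hrdef ▸ by positivity
  have hr1 : r ≤ 1 := hrdef ▸ rpow_le_one hs.le (sin_le_one _) (by norm_num)
  have hr3 : sin (x / 2) = r ^ 3 := by
    rw [hrdef, ← rpow_natCast, ← rpow_mul hs.le]; norm_num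
  have hinv : sin (x / 2) ^ (-(1 : ℝ) / 3) = r⁻¹ := by
    rw [hrdef, ← rpow_neg hs.le]; norm_num
  rw [hinv]
  -- a subinterval
  obtain ⟨c, hc0, hc1, hc⟩ : ∃ c, 0 ≤ c ∧ c + 2 * r ≤ 2 * π ∧
      ∀ y ∈ Ioo c (c + 2 * r), Fp x y ≤ 5 * r ^ 4 := by
    rcases le_total x π with h | h
    · refine ⟨2 * π - 2 * r, by linarith, by linarith, fun y hy => ?_⟩
      have := Fp_le_aux (x / 2) (π - y / 2) r (by linarith [hx.1]) (by linarith) hr.le hr1 hr3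
        (by linarith [hy.2]) (by linarith [hy.1])
      rw [cos_pi_sub, sin_pi_sub] at this
      unfold Fp
      linarith
    · refine ⟨0, le_rfl, by linarith, fun y hy => ?_⟩
      have := Fp_le_aux (π - x / 2) (y / 2) r (by linarith [hx.2]) (by linarith) hr.le hr1
        (by rw [sin_pi_sub]; exact hr3)
        (by linarith [hy.1]) (by linarith [hy.2])
      rw [cos_pi_sub, sin_pi_sub] at this
      unfold Fp
      nlinarith
  have hsub : Ioo c (c + 2 * r) ⊆ II := fun y hy => ⟨by linarith [hy.1], by linarith [hy.2]⟩
  have hint := K2_int x hx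
  have h1 : ∫ y in Ioo c (c + 2 * r), K2 x y ≤ VV x :=
    setIntegral_mono_set hint (Eventually.of_forall fun y => K2_nonneg x y)
      (Eventually.of_forall hsub)
  have h2 : ∫ y in Ioo c (c + 2 * r), (2 * r ^ 2)⁻¹ ≤ ∫ y in Ioo c (c + 2 * r), K2 x y := by
    refine setIntegral_mono_on (integrableOn_const measure_Ioo_lt_top.ne) (hint.mono_set hsub) measurableSet_Ioo fun y hy => ?_
    have hF := hc y hy
    have hy' : y ∈ Ioo 0 (2 * π) := ⟨by linarith [hy.1], by linarith [hy.2]⟩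
    have hFpos : 0 < Fp x y := by
      have := sin_half_pos hy'
      unfold Fp; positivity
    have hsq : √(Fp x y) ≤ 4 * r ^ 2 := by
      rw [sqrt_le_left (by positivity)]
      nlinarith [pow_pos hr 4]
    have hsp := Real.sqrt_pos.2 hFpos
    unfold K2
    rw [inv_eq_one_div, div_le_div_iff₀ (by positivity) hsp]
    linarith
  have h3 : ∫ y in Ioo c (c + 2 * r), (2 * r ^ 2)⁻¹ = r⁻¹ := by
    rw [setIntegral_const]
    simp [hr.le]
    field_simp
  linarith

lemma weight_le (ε : ℝ) (hε : ε ∈ Ioo (0 : ℝ) (3 / 10)) (lam : ℝ) (hl : lam ∈ Ioo (0 : ℝ) 1)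
    (y : ℝ) (hy : y ∈ Ioo 0 (2 * π)) :
    sin (y / 2) / (WW y + lam) ≤ lam ^ (-(1 : ℝ) / 10 - ε) * sin (y / 2) ^ (-(1 : ℝ) / 2 + 5 * ε / 3) := by
  obtain ⟨he0, he1⟩ := hε
  have hs := sin_half_pos hy
  have hl0 := hl.1
  have hW : sin (y / 2) ^ ((5 : ℝ) / 3) ≤ WW y := by
    calc sin (y / 2) ^ ((5 : ℝ) / 3) = sin (y / 2) ^ 2 * sin (y / 2) ^ (-(1 : ℝ) / 3) := by
          rw [← rpow_natCast, ← rpow_add hs]; norm_num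
      _ ≤ _ := by unfold WW; gcongr; exact VV_lower y hy
  have hW0 : 0 < WW y := lt_of_lt_of_le (by positivity) hW
  have h1 : sin (y / 2) ^ (3 / 2 - 5 * ε / 3) * lam ^ (1 / 10 + ε) ≤ WW y + lam := by
    calc sin (y / 2) ^ (3 / 2 - 5 * ε / 3) * lam ^ (1 / 10 + ε)
        = (sin (y / 2) ^ ((5 : ℝ) / 3)) ^ (9 / 10 - ε) * lam ^ (1 / 10 + ε) := by
          rw [← rpow_mul hs.le]; ring_nf
      _ ≤ (WW y + lam) ^ (9 / 10 - ε) * (WW y + lam) ^ (1 / 10 + ε) := by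
          gcongr <;> linarith
      _ = WW y + lam := by
          rw [← rpow_add (by positivity)]; ring_nf; exact rpow_one _
  rw [div_le_iff₀ (by positivity)]
  calc sin (y / 2) = (lam ^ (-(1 : ℝ) / 10 - ε) * sin (y / 2) ^ (-(1 : ℝ) / 2 + 5 * ε / 3)) *
        (sin (y / 2) ^ (3 / 2 - 5 * ε / 3) * lam ^ (1 / 10 + ε)) := by
        rw [show ∀ p q r s : ℝ, p * q * (r * s) = (p * s) * (q * r) by intros; ring,
          ← rpow_add hl0, ← rpow_add hs]
        ring_nf; simp
    _ ≤ _ := by gcongr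

lemma mixed_rpow (X Y η : ℝ) (hX : 0 < X) (hY : 0 < Y) (hη : η < 1 / 2) :
    X ^ (-(1 : ℝ) / 2 + η) * Y ^ (-(1 : ℝ) / 2) ≤ X ^ (-1 + η) + Y ^ (-1 + η) := by
  rcases le_total X Y with h | h
  · have : Y ^ (-(1 : ℝ) / 2) ≤ X ^ (-(1 : ℝ) / 2) := rpow_le_rpow_of_nonpos hX h (by norm_num)
    calc _ ≤ X ^ (-(1 : ℝ) / 2 + η) * X ^ (-(1 : ℝ) / 2) := by gcongr
      _ = X ^ (-1 + η) := by rw [← rpow_add hX]; ring_nf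
      _ ≤ _ := by have : 0 ≤ Y ^ (-1 + η) := by positivity
                  linarith
  · have : X ^ (-(1 : ℝ) / 2 + η) ≤ Y ^ (-(1 : ℝ) / 2 + η) :=
      rpow_le_rpow_of_nonpos hY h (by linarith)
    calc _ ≤ Y ^ (-(1 : ℝ) / 2 + η) * Y ^ (-(1 : ℝ) / 2) := by gcongr
      _ = Y ^ (-1 + η) := by rw [← rpow_add hY]; ring_nf
      _ ≤ _ := by have : 0 ≤ X ^ (-1 + η) := by positivity
                  linarith

lemma div_sqrt_lin (s d F : ℝ) (hs : 0 < s) (hd : 0 < d) (h : 2 * s * d ≤ F) :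
    4 / √F ≤ 4 * (s ^ (-(1 : ℝ) / 2) * d ^ (-(1 : ℝ) / 2)) := by
  rw [← mul_rpow hs.le hd.le]
  refine two_div_sqrt_le _ _ _ (by norm_num) (by positivity) ?_
  nlinarith [mul_pos hs hd]

lemma K1_le (x : ℝ) (hx : x ∈ Ioo 0 (2 * π)) : ∃ y0 ∈ Icc 0 (2 * π), ∃ y1 ∈ Icc 0 (2 * π),
    ∀ y ∈ Ioo 0 (2 * π), y ≠ y0 → y ≠ y1 →
      K1 x y ≤ 4 * (sin (x / 2) ^ (-(1 : ℝ) / 2) * |y - y0| ^ (-(1 : ℝ) / 2))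
        + 4 * (sin (x / 2) ^ (-(1 : ℝ) / 2) * |y - y1| ^ (-(1 : ℝ) / 2)) := by
  obtain ⟨y0, hy0, H0⟩ := exists_y0 x hx
  obtain ⟨y1, hy1, H1⟩ := exists_y1 x hx
  have hs := sin_half_pos hx
  refine ⟨y0, hy0, y1, hy1, fun y hy n0 n1 => ?_⟩
  have d0 : 0 < |y - y0| := abs_pos.2 (sub_ne_zero.2 n0)
  have d1 : 0 < |y - y1| := abs_pos.2 (sub_ne_zero.2 n1)
  have p0 : 0 ≤ 4 * (sin (x / 2) ^ (-(1 : ℝ) / 2) * |y - y0| ^ (-(1 : ℝ) / 2)) := by positivity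
  have p1 : 0 ≤ 4 * (sin (x / 2) ^ (-(1 : ℝ) / 2) * |y - y1| ^ (-(1 : ℝ) / 2)) := by positivity
  unfold K1
  split_ifs with hF
  · rcases lt_trichotomy (cos (x / 2) + cos (y / 2)) 0 with h | h | h
    · have := div_sqrt_lin _ _ _ hs d1 (H1 y hy h hF)
      linarith
    · exfalso
      have h2 := sin_half_pos hy
      have h3 := mul_pos hs h2
      unfold Fm at hF
      rw [h] at hF
      nlinarith
    · have := div_sqrt_lin _ _ _ hs d0 (H0 y ⟨hy, h, hF⟩)
      linarith
  · linarith

lemma phi_zero (lam : ℝ) : phiLam lam 0 = 0 := by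
  unfold phiLam
  refine integral_eq_zero_of_ae ?_
  filter_upwards [ae_Ioo] with y hy
  have hc : 0 < 1 + cos (y / 2) := by
    have : cos π < cos (y / 2) :=
      cos_lt_cos_of_nonneg_of_le_pi (by linarith [hy.1]) le_rfl (by linarith [hy.2])
    rw [cos_pi] at this; linarith
  have : 2 * K2 0 y - K1 0 y = 0 := by
    unfold K2 K1 Fp Fm
    simp only [zero_div, cos_zero, sin_zero, mul_zero, zero_mul, add_zero, sub_zero]
    rw [if_pos (by positivity)]; ring
  simp [Bker, this]
/-- **Lemma 6.3.**  For every `0 < ε < 3/10` there is `c_ε > 0` such that for all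
`0 < λ < 1` and `x ∈ I`, `|φ_λ(x)| ≤ c_ε λ^{−1/10−ε} (V(x) sin(x/2))^{−1/2}`. -/
theorem phiLam_pointwise_bound :
    ∀ ε ∈ Set.Ioo (0 : ℝ) (3 / 10), ∃ c > (0 : ℝ),
      ∀ lam ∈ Set.Ioo (0 : ℝ) 1, ∀ x ∈ II,
        |phiLam lam x|
          ≤ c * lam ^ (-(1 : ℝ) / 10 - ε) * (VV x * Real.sin (x / 2)) ^ (-(1 : ℝ) / 2) := by
  intro ε hε
  have hpi := pi_pos
  obtain ⟨he0, he1⟩ := hε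
  obtain ⟨M, hM⟩ := abs_rpow_bound (-1 + 5 * ε / 3) (by linarith)
  have hSint := sin_rpow_int (-1 + 5 * ε / 3) (by linarith) (by linarith)
  obtain ⟨A, hA⟩ : ∃ A, A = ∫ y in II, sin (y / 2) ^ (-1 + 5 * ε / 3) := ⟨_, rfl⟩
  refine ⟨max 1 (12 * A + 4 * M + 4 * M), lt_of_lt_of_le one_pos (le_max_left _ _), ?_⟩
  intro lam hl x hx
  rcases hx.1.eq_or_lt with h0 | h0
  · rw [← h0, phi_zero]
    simp
  have hx' : x ∈ Ioo 0 (2 * π) := ⟨h0, hx.2⟩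
  have hs := sin_half_pos hx'
  have hl0 := hl.1
  have hVpos : ∀ z ∈ Ioo 0 (2 * π), 0 < VV z := fun z hz =>
    lt_of_lt_of_le (by have := sin_half_pos hz; positivity) (VV_lower z hz)
  have hV := hVpos x hx'
  obtain ⟨y0, hy0, y1, hy1, hK1⟩ := K1_le x hx'
  obtain ⟨P, hP⟩ : ∃ P, P = lam ^ (-(1 : ℝ) / 10 - ε) * (VV x * sin (x / 2)) ^ (-(1 : ℝ) / 2) :=
    ⟨_, rfl⟩
  have hP0 : 0 ≤ P := hP ▸ by positivity
  have hPe : P = VV x ^ (-(1 : ℝ) / 2) * sin (x / 2) ^ (-(1 : ℝ) / 2) * lam ^ (-(1 : ℝ) / 10 - ε) := by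
    rw [hP, mul_rpow hV.le hs.le]; ring
  obtain ⟨i0, b0⟩ := hM y0 hy0
  obtain ⟨i1, b1⟩ := hM y1 hy1
  have hbound : |phiLam lam x| ≤ ∫ y in II, P * (12 * sin (y / 2) ^ (-1 + 5 * ε / 3)
      + 4 * |y - y0| ^ (-1 + 5 * ε / 3) + 4 * |y - y1| ^ (-1 + 5 * ε / 3)) := by
    unfold phiLam
    rw [← Real.norm_eq_abs]
    refine norm_integral_le_of_norm_le
      ((((hSint.const_mul 12).add (i0.const_mul 4)).add (i1.const_mul 4)).const_mul P) ?_
    have n0 : ∀ᵐ y ∂(volume.restrict II), y ≠ y0 := ae_restrict_of_ae (Measure.ae_ne volume y0)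
    have n1 : ∀ᵐ y ∂(volume.restrict II), y ≠ y1 := ae_restrict_of_ae (Measure.ae_ne volume y1)
    filter_upwards [ae_Ioo, n0, n1] with y hy n0 n1
    have hsy := sin_half_pos hy
    have hVy := hVpos y hy
    have hk1 := hK1 y hy n0 n1
    have hk2 := K2_le x y hx' hy
    have hk1n := K1_nonneg x y
    have hk2n := K2_nonneg x y
    have hw := weight_le ε ⟨he0, he1⟩ lam hl y hy
    have hW0 : 0 ≤ WW y := by unfold WW; positivity
    have d0 : 0 < |y - y0| := abs_pos.2 (sub_ne_zero.2 n0)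
    have d1 : 0 < |y - y1| := abs_pos.2 (sub_ne_zero.2 n1)
    have hom : |omg' y| ≤ 1 := by
      unfold omg'
      rw [if_neg hy.1.ne', abs_div, abs_of_pos (by norm_num : (0 : ℝ) < 2)]
      linarith [abs_cos_le_one (y / 2)]
    have hcancel : VV y ^ (-(1 : ℝ) / 2) * √(WW y) = sin (y / 2) := by
      unfold WW
      rw [sqrt_mul (by positivity), sqrt_sq hsy.le, neg_div, rpow_neg hVy.le, ← sqrt_eq_rpow]
      have := Real.sqrt_pos.2 hVy
      field_simp
    have hre : Bker x y * (√(WW y) / (WW y + lam) * omg' y)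
        = VV x ^ (-(1 : ℝ) / 2) * (2 * K2 x y - K1 x y) * (sin (y / 2) / (WW y + lam)) * omg' y := by
      rw [← hcancel]; unfold Bker; ring
    have hkk : |2 * K2 x y - K1 x y| ≤ sin (x / 2) ^ (-(1 : ℝ) / 2) *
        (4 * sin (y / 2) ^ (-(1 : ℝ) / 2) + 4 * |y - y0| ^ (-(1 : ℝ) / 2)
          + 4 * |y - y1| ^ (-(1 : ℝ) / 2)) := by
      rw [abs_le]; constructor <;> nlinarith
    have m0 := mixed_rpow (sin (y / 2)) |y - y0| (5 * ε / 3) hsy d0 (by linarith)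
    have m1 := mixed_rpow (sin (y / 2)) |y - y1| (5 * ε / 3) hsy d1 (by linarith)
    have m2 : sin (y / 2) ^ (-(1 : ℝ) / 2 + 5 * ε / 3) * sin (y / 2) ^ (-(1 : ℝ) / 2)
        = sin (y / 2) ^ (-1 + 5 * ε / 3) := by
      rw [← rpow_add hsy]; ring_nf
    rw [hre, Real.norm_eq_abs, abs_mul, abs_mul, abs_mul,
      abs_of_nonneg (by positivity : 0 ≤ VV x ^ (-(1 : ℝ) / 2)),
      abs_of_nonneg (by positivity : 0 ≤ sin (y / 2) / (WW y + lam))]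
    calc VV x ^ (-(1 : ℝ) / 2) * |2 * K2 x y - K1 x y| * (sin (y / 2) / (WW y + lam)) * |omg' y|
        ≤ VV x ^ (-(1 : ℝ) / 2) * (sin (x / 2) ^ (-(1 : ℝ) / 2) *
        (4 * sin (y / 2) ^ (-(1 : ℝ) / 2) + 4 * |y - y0| ^ (-(1 : ℝ) / 2)
          + 4 * |y - y1| ^ (-(1 : ℝ) / 2))) *
          (lam ^ (-(1 : ℝ) / 10 - ε) * sin (y / 2) ^ (-(1 : ℝ) / 2 + 5 * ε / 3)) * 1 := by
          gcongr
      _ = P * (4 * (sin (y / 2) ^ (-(1 : ℝ) / 2 + 5 * ε / 3) * sin (y / 2) ^ (-(1 : ℝ) / 2))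
          + 4 * (sin (y / 2) ^ (-(1 : ℝ) / 2 + 5 * ε / 3) * |y - y0| ^ (-(1 : ℝ) / 2))
          + 4 * (sin (y / 2) ^ (-(1 : ℝ) / 2 + 5 * ε / 3) * |y - y1| ^ (-(1 : ℝ) / 2))) := by
          rw [hPe]; ring
      _ ≤ _ := by
          refine mul_le_mul_of_nonneg_left ?_ hP0
          rw [m2]; linarith
  have hval : ∫ y in II, P * (12 * sin (y / 2) ^ (-1 + 5 * ε / 3)
      + 4 * |y - y0| ^ (-1 + 5 * ε / 3) + 4 * |y - y1| ^ (-1 + 5 * ε / 3))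
      = P * (12 * A + 4 * (∫ y in II, |y - y0| ^ (-1 + 5 * ε / 3))
        + 4 * (∫ y in II, |y - y1| ^ (-1 + 5 * ε / 3))) := by
    have hadd : IntegrableOn (fun y => 12 * sin (y / 2) ^ (-1 + 5 * ε / 3)
        + 4 * |y - y0| ^ (-1 + 5 * ε / 3)) II := (hSint.const_mul 12).add (i0.const_mul 4)
    rw [integral_const_mul, integral_add hadd (i1.const_mul 4),
      integral_add (hSint.const_mul 12) (i0.const_mul 4), integral_const_mul, integral_const_mul,
      integral_const_mul, hA]
  rw [hval] at hbound
  calc |phiLam lam x| ≤ _ := hbound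
    _ ≤ P * max 1 (12 * A + 4 * M + 4 * M) := by
      refine mul_le_mul_of_nonneg_left (le_trans ?_ (le_max_right _ _)) hP0
      linarith
    _ = _ := by rw [hP]; ring
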